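/- For all n ≥ 0, A_{2n+2}(p,−1) = ((p+1)/2) · ((p−1)/2)^n · E_{2n+3}, where A_m(p,q) is the refined Eulerian polynomial and E_m is the Euler number. -/

import Mathlib

open Finset

/-- The set of (0-based) descent indices of a permutation of `Fin n`:
`i` is a descent index if `π i > π (i+1)` (so the 1-based descent position is `i+1`). -/
def descentSet {n : ℕ} (π : Equiv.Perm (Fin n)) : Finset ℕ :=
  (Finset.range n).filter
    (fun i => ∃ h : i + 1 < n, π ⟨i + 1, h⟩ < π ⟨i, Nat.lt_of_succ_lt h⟩)

/-- The number of descents of `π`. -/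
def des {n : ℕ} (π : Equiv.Perm (Fin n)) : ℕ := (descentSet π).card

/-- The number of descents of `π` at odd (1-based) positions, i.e. even 0-based indices. -/
def odes {n : ℕ} (π : Equiv.Perm (Fin n)) : ℕ :=
  ((descentSet π).filter (fun i => Even i)).card

/-- The number of descents of `π` at even (1-based) positions, i.e. odd 0-based indices. -/
def edes {n : ℕ} (π : Equiv.Perm (Fin n)) : ℕ :=
  ((descentSet π).filter (fun i => Odd i)).card

/-- The refined Eulerian polynomial `A_n(p,q) = Σ_π p^{odes π} q^{edes π}`. -/
def refinedEulerian (n : ℕ) (p q : ℝ) : ℝ :=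
  ∑ π : Equiv.Perm (Fin n), p ^ odes π * q ^ edes π

/-- The Eulerian polynomial `A_n(q) = Σ_π q^{des π}` as a function. -/
def eulerianEval (n : ℕ) (q : ℝ) : ℝ :=
  ∑ π : Equiv.Perm (Fin n), q ^ des π

/-- The Eulerian polynomial `A_n(q)` as a polynomial. -/
noncomputable def eulerianPolynomial (n : ℕ) : Polynomial ℝ :=
  ∑ π : Equiv.Perm (Fin n), Polynomial.X ^ des π

/-- The Eulerian number `A_{n,k}`: the number of permutations of `[n]` with `k` descents. -/
def eulerianNumber (n k : ℕ) : ℕ :=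
  (Finset.univ.filter (fun π : Equiv.Perm (Fin n) => des π = k)).card

/-- A permutation `a_1 a_2 … a_n` is alternating if `a_1 > a_2 < a_3 > ⋯`. -/
def IsAlternating {n : ℕ} (π : Equiv.Perm (Fin n)) : Prop :=
  ∀ i : ℕ, ∀ h : i + 1 < n,
    (π ⟨i + 1, h⟩ < π ⟨i, Nat.lt_of_succ_lt h⟩ ↔ Even i)

open scoped Classical in
/-- The Euler number `E_n`: the number of alternating permutations of `[n]`. -/
noncomputable def eulerNumber (n : ℕ) : ℕ :=
  (Finset.univ.filter (fun π : Equiv.Perm (Fin n) => IsAlternating π)).card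

/-- `a_{n,k}`: the number of permutations of `[n]` with `k` even descents and no odd descents. -/
def aNum (n k : ℕ) : ℕ :=
  (Finset.univ.filter (fun π : Equiv.Perm (Fin n) => edes π = k ∧ odes π = 0)).card

/-!
A permutation factors around its least value as `σ 0 τ`: there is a descent into the `0`, an ascent
out of it, and `σ`, `τ` are arbitrary words on complementary sets of values. Hence the means over
all permutations of a product of weights of descents and ascents satisfy a quadratic recurrence.
For the weights selecting the alternating permutations of odd length it reads `tan' = 1 + tan ^ 2`.
For `A_m (p, -1)` and `A_m (-1, p)`, whose exponential generating functions have even parts `e₁`,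
`e₂` and odd parts `f₁`, `f₂`, it reads

* `e₁' = p f₁ e₁ + (2 - e₁) f₂` and `f₁' = (2 - e₁) e₂ + p f₁ ^ 2`,
* `e₂' = -f₂ e₂ + (1 - p + p e₂) f₁` and `f₂' = (1 - p + p e₂) e₁ - f₂ ^ 2`.

With `a = (p - 1) / 2`, the function `u = tan (√a t) / √a` satisfies `u' = 1 + a u ^ 2`, and the
system is solved by `f₁ = f₂ = u`, `e₂ = 1` and `e₁ = 1 + (p + 1) / 2 * u ^ 2`.
-/

open scoped BigOperators

theorem card_mul_card_filter_perm_apply_eq {X : Type*} [Fintype X] [DecidableEq X] (x y : X) :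
    Fintype.card X * #{π : Equiv.Perm X | π x = y} = (Fintype.card X).factorial := by
  have card_eq (z : X) : #{π : Equiv.Perm X | π x = z} = #{π : Equiv.Perm X | π x = y} :=
    card_equiv (Equiv.mulLeft (Equiv.swap z y)) fun π => by
      simp [Equiv.swap_apply_eq_iff]
  calc Fintype.card X * #{π : Equiv.Perm X | π x = y}
      = ∑ z : X, #{π : Equiv.Perm X | π x = z} := by simp [card_eq]
    _ = #(univ : Finset (Equiv.Perm X)) :=
        (card_eq_sum_card_fiberwise fun π _ => mem_coe.2 (mem_univ (π x))).symm
    _ = (Fintype.card X).factorial := by rw [card_univ, Fintype.card_perm]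

section DescentWeight

variable {M X Y : Type*} [CommMonoid M] [LinearOrder X] [LinearOrder Y] {n : ℕ}

/-- The descent weight of a word `f` of length `n`: the product over the (0-based) positions
`i < n - 1` of `α i` if `f` has a descent at `i`, and of `β i` if it has not. -/
def descentWeight (α β : ℕ → M) (f : Fin n → X) : M :=
  ∏ i ∈ range (n - 1),
    if ∃ h : i + 1 < n, f ⟨i + 1, h⟩ < f ⟨i, Nat.lt_of_succ_lt h⟩ then α i else β i

theorem descentWeight_strictMono_comp (α β : ℕ → M) {g : X → Y} (hg : StrictMono g)
    (f : Fin n → X) : descentWeight α β (g ∘ f) = descentWeight α β f := by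
  simp only [descentWeight, Function.comp_apply, hg.lt_iff_lt]

/-- The positions to the left of position `k` in a word of length `k + l + 1`. -/
def leftBlock (k l : ℕ) : Fin k ↪ Fin (k + l + 1) where
  toFun i := ⟨i, by omega⟩
  inj' i j h := by simpa [Fin.ext_iff] using h

/-- The positions to the right of position `k` in a word of length `k + l + 1`. -/
def rightBlock (k l : ℕ) : Fin l ↪ Fin (k + l + 1) where
  toFun i := ⟨k + 1 + i, by omega⟩
  inj' i j h := by simpa [Fin.ext_iff] using h

/-- The position `k` of a word of length `k + l + 1`, between its two blocks. -/
def pivot (k l : ℕ) : Fin (k + l + 1) :=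
  ⟨k, by omega⟩

@[simp]
theorem val_leftBlock {k l : ℕ} (i : Fin k) : (leftBlock k l i : ℕ) = i :=
  rfl

@[simp]
theorem val_rightBlock {k l : ℕ} (i : Fin l) : (rightBlock k l i : ℕ) = k + 1 + i :=
  rfl

@[simp]
theorem val_pivot (k l : ℕ) : (pivot k l : ℕ) = k :=
  rfl

theorem pivot_notMem_range_leftBlock (k l : ℕ) : pivot k l ∉ Set.range (leftBlock k l) := by
  rintro ⟨i, hi⟩
  exact i.isLt.ne (congrArg Fin.val hi)

theorem pivot_notMem_range_rightBlock (k l : ℕ) : pivot k l ∉ Set.range (rightBlock k l) := by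
  rintro ⟨i, hi⟩
  have := congrArg Fin.val hi
  rw [val_rightBlock, val_pivot] at this
  omega

theorem leftBlock_ne_rightBlock {k l : ℕ} (i : Fin k) (j : Fin l) :
    leftBlock k l i ≠ rightBlock k l j :=
  Fin.ne_of_val_ne (by rw [val_leftBlock, val_rightBlock]; omega)

theorem descentWeight_eq_mul_of_forall_pivot_lt (α β : ℕ → M) {k l : ℕ} {f : Fin (k + l + 1) → X}
    (hf : ∀ i ≠ pivot k l, f (pivot k l) < f i) :
    descentWeight α β f =
      (if k = 0 then 1 else α (k - 1)) * descentWeight α β (f ∘ leftBlock k l) *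
        ((if l = 0 then 1 else β k) *
          descentWeight (fun i => α (k + 1 + i)) (fun i => β (k + 1 + i))
            (f ∘ rightBlock k l)) := by
  have descent_before_pivot (h : k ≠ 0) : f (pivot k l) < f ⟨k - 1, by omega⟩ :=
    hf _ (Fin.ne_of_val_ne (by simpa using by omega))
  have ascent_after_pivot (h : k + 1 < k + l + 1) : f (pivot k l) < f ⟨k + 1, h⟩ :=
    hf _ (Fin.ne_of_val_ne (by simp))
  rw [descentWeight, Nat.add_sub_cancel, prod_range_add]
  congr 1
  · cases k with
    | zero => simp [descentWeight]
    | succ k =>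
      rw [prod_range_succ_comm, if_pos ⟨by omega, descent_before_pivot k.succ_ne_zero⟩,
        if_neg k.succ_ne_zero]
      refine congrArg₂ _ rfl (prod_congr rfl fun i hi => ?_)
      have hi : i < k := mem_range.1 hi
      have left_eq (j : Fin (k + 1)) : leftBlock (k + 1) l j = ⟨j, by omega⟩ := rfl
      simp [left_eq, hi, show i + 1 < k + 1 + l + 1 by omega]
  · cases l with
    | zero => simp [descentWeight]
    | succ l =>
      rw [prod_range_succ', mul_comm, if_neg l.succ_ne_zero]
      refine congrArg₂ _ (if_neg ?_) (prod_congr rfl fun i hi => ?_)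
      · rintro ⟨h, descent⟩
        exact descent.not_gt (ascent_after_pivot h)
      · have hi : i < l := mem_range.1 hi
        have right_eq (j : Fin (l + 1)) : rightBlock k (l + 1) j = ⟨k + 1 + j, by omega⟩ := rfl
        simp [right_eq, hi, add_comm, add_left_comm]

end DescentWeight

/-- The permutation of the positions of a word of length `k + l + 1` that acts as `σ` on the left
block, as `τ` on the right block, and fixes the pivot. -/
def blockPerm {k l : ℕ} (σ : Equiv.Perm (Fin k)) (τ : Equiv.Perm (Fin l)) :
    Equiv.Perm (Fin (k + l + 1)) :=
  σ.viaFintypeEmbedding (leftBlock k l) * τ.viaFintypeEmbedding (rightBlock k l)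

section BlockPerm

variable {k l : ℕ} (σ : Equiv.Perm (Fin k)) (τ : Equiv.Perm (Fin l))

theorem blockPerm_pivot : blockPerm σ τ (pivot k l) = pivot k l := by
  rw [blockPerm, Equiv.Perm.mul_apply,
    τ.viaFintypeEmbedding_apply_notMem_range _ (pivot_notMem_range_rightBlock k l),
    σ.viaFintypeEmbedding_apply_notMem_range _ (pivot_notMem_range_leftBlock k l)]

theorem blockPerm_comp_leftBlock : blockPerm σ τ ∘ leftBlock k l = leftBlock k l ∘ σ := by
  funext i
  have notMem : leftBlock k l i ∉ Set.range (rightBlock k l) :=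
    fun ⟨j, hj⟩ => leftBlock_ne_rightBlock i j hj.symm
  rw [Function.comp_apply, blockPerm, Equiv.Perm.mul_apply,
    τ.viaFintypeEmbedding_apply_notMem_range _ notMem, σ.viaFintypeEmbedding_apply_image,
    Function.comp_apply]

theorem blockPerm_comp_rightBlock : blockPerm σ τ ∘ rightBlock k l = rightBlock k l ∘ τ := by
  funext j
  have notMem : rightBlock k l (τ j) ∉ Set.range (leftBlock k l) :=
    fun ⟨i, hi⟩ => leftBlock_ne_rightBlock i (τ j) hi
  rw [Function.comp_apply, blockPerm, Equiv.Perm.mul_apply, τ.viaFintypeEmbedding_apply_image,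
    σ.viaFintypeEmbedding_apply_notMem_range _ notMem, Function.comp_apply]

end BlockPerm

section MeanDescentWeight

variable {K : Type*} [Field K] [CharZero K] (α β : ℕ → K)

/-- The mean of the descent weight over all permutations of `Fin n`. Dividing by `n!` turns the
binomial convolutions of the underlying counting problems into plain ones. -/
def meanDescentWeight (n : ℕ) : K :=
  𝔼 π : Equiv.Perm (Fin n), descentWeight α β π

theorem expect_descentWeight_comp_perm {X : Type*} [LinearOrder X] {n : ℕ} {f : Fin n → X}
    (hf : Function.Injective f) :
    𝔼 σ : Equiv.Perm (Fin n), descentWeight α β (f ∘ σ) = meanDescentWeight α β n := by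
  have sorted : StrictMono (f ∘ Tuple.sort f) :=
    (Tuple.monotone_sort f).strictMono_of_injective (hf.comp (Tuple.sort f).injective)
  refine Fintype.expect_equiv (Equiv.mulLeft (Tuple.sort f)⁻¹) _ _ fun σ => ?_
  rw [← descentWeight_strictMono_comp α β sorted]
  congr 1
  funext i
  simp

theorem sum_perm_comp_blockPerm {M : Type*} [AddCommMonoid M] {k l : ℕ}
    (F : (Fin (k + l + 1) → Fin (k + l + 1)) → M) (σ : Equiv.Perm (Fin k))
    (τ : Equiv.Perm (Fin l)) :
    ∑ π : Equiv.Perm (Fin (k + l + 1)) with π (pivot k l) = 0, F (π ∘ blockPerm σ τ) =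
      ∑ π : Equiv.Perm (Fin (k + l + 1)) with π (pivot k l) = 0, F π :=
  sum_equiv (Equiv.mulRight (blockPerm σ τ)) (by simp [blockPerm_pivot]) fun _ _ => rfl

theorem sum_descentWeight_pivot_eq_zero (k l : ℕ) :
    ∑ π : Equiv.Perm (Fin (k + l + 1)) with π (pivot k l) = 0, descentWeight α β π =
      #{π : Equiv.Perm (Fin (k + l + 1)) | π (pivot k l) = 0} *
        (((if k = 0 then 1 else α (k - 1)) * meanDescentWeight α β k) *
          ((if l = 0 then 1 else β k) *
            meanDescentWeight (fun i => α (k + 1 + i)) (fun i => β (k + 1 + i)) l)) := by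
  -- averaging over rearrangements inside the blocks makes the two blocks independent
  calc ∑ π : Equiv.Perm (Fin (k + l + 1)) with π (pivot k l) = 0, descentWeight α β π
      = 𝔼 σ : Equiv.Perm (Fin k), 𝔼 τ : Equiv.Perm (Fin l),
          ∑ π : Equiv.Perm (Fin (k + l + 1)) with π (pivot k l) = 0,
            descentWeight α β (π ∘ blockPerm σ τ) := by
        simp only [sum_perm_comp_blockPerm, Fintype.expect_const]
    _ = ∑ π : Equiv.Perm (Fin (k + l + 1)) with π (pivot k l) = 0,
          𝔼 σ : Equiv.Perm (Fin k), 𝔼 τ : Equiv.Perm (Fin l),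
            descentWeight α β (π ∘ blockPerm σ τ) := by
        simp only [expect_sum_comm]
    _ = _ := by
        rw [← nsmul_eq_mul]
        refine sum_eq_card_nsmul fun π hπ => ?_
        have pivot_lt (σ : Equiv.Perm (Fin k)) (τ : Equiv.Perm (Fin l)) (i) (hi : i ≠ pivot k l) :
            (π ∘ blockPerm σ τ) (pivot k l) < (π ∘ blockPerm σ τ) i := by
          rw [Function.comp_apply, blockPerm_pivot, (mem_filter.1 hπ).2, Fin.pos_iff_ne_zero,
            ← (mem_filter.1 hπ).2, Function.comp_apply, π.injective.ne_iff]
          rwa [← blockPerm_pivot σ τ, (blockPerm σ τ).injective.ne_iff]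
        simp only [fun σ τ => descentWeight_eq_mul_of_forall_pivot_lt α β (pivot_lt σ τ),
          Function.comp_assoc, blockPerm_comp_leftBlock, blockPerm_comp_rightBlock, ← mul_expect,
          ← expect_mul]
        simp only [← Function.comp_assoc,
          expect_descentWeight_comp_perm _ _ (π.injective.comp (leftBlock k l).injective),
          expect_descentWeight_comp_perm _ _ (π.injective.comp (rightBlock k l).injective)]

theorem succ_mul_meanDescentWeight_succ (n : ℕ) :
    (n + 1 : K) * meanDescentWeight α β (n + 1) = ∑ x ∈ antidiagonal n,
      ((if x.1 = 0 then 1 else α (x.1 - 1)) * meanDescentWeight α β x.1) *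
        ((if x.2 = 0 then 1 else β x.1) *
          meanDescentWeight (fun i => α (x.1 + 1 + i)) (fun i => β (x.1 + 1 + i)) x.2) := by
  have fiber (k : Fin (n + 1)) :
      ∑ π : Equiv.Perm (Fin (n + 1)) with π k = 0, descentWeight α β π =
        #{π : Equiv.Perm (Fin (n + 1)) | π k = 0} *
          (((if (k : ℕ) = 0 then 1 else α (k - 1)) * meanDescentWeight α β k) *
            ((if n - k = 0 then 1 else β k) * meanDescentWeight (fun i => α (k + 1 + i))
              (fun i => β (k + 1 + i)) (n - k))) := by
    obtain ⟨k, hk⟩ := k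
    obtain ⟨l, rfl⟩ := Nat.exists_eq_add_of_le (Nat.lt_succ_iff.1 hk)
    rw [Nat.add_sub_cancel_left]
    exact sum_descentWeight_pivot_eq_zero α β k l
  have card_fiber (k : Fin (n + 1)) :
      (n + 1 : K) * #{π : Equiv.Perm (Fin (n + 1)) | π k = 0} = (n + 1).factorial := by
    exact_mod_cast (by simpa using card_mul_card_filter_perm_apply_eq k 0)
  have factorial_ne_zero : ((n + 1).factorial : K) ≠ 0 :=
    Nat.cast_ne_zero.2 (n + 1).factorial_ne_zero
  rw [meanDescentWeight, Fintype.expect_eq_sum_div_card, Fintype.card_perm, Fintype.card_fin,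
    ← sum_fiberwise univ (fun π : Equiv.Perm (Fin (n + 1)) => π.symm 0), sum_div, mul_sum,
    Finset.Nat.sum_antidiagonal_eq_sum_range_succ_mk, sum_range]
  refine sum_congr rfl fun k _ => ?_
  simp only [Equiv.symm_apply_eq, eq_comm (a := (0 : Fin (n + 1)))]
  rw [fiber, mul_div_assoc', ← mul_assoc, card_fiber, mul_div_cancel_left₀ _ factorial_ne_zero]

end MeanDescentWeight

theorem sum_antidiagonal_two_mul_add_one {M : Type*} [AddCommMonoid M] (n : ℕ) (f : ℕ × ℕ → M) :
    ∑ x ∈ antidiagonal (2 * n + 1), f x =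
      ∑ x ∈ antidiagonal n, f (2 * x.1 + 1, 2 * x.2) +
        ∑ x ∈ antidiagonal n, f (2 * x.1, 2 * x.2 + 1) := by
  induction n generalizing f with
  | zero => simp [Finset.Nat.sum_antidiagonal_succ, add_comm]
  | succ n ih =>
    rw [show 2 * (n + 1) + 1 = 2 * n + 1 + 1 + 1 by ring]
    simp only [Finset.Nat.sum_antidiagonal_succ (n := 2 * n + 1 + 1),
      Finset.Nat.sum_antidiagonal_succ (n := 2 * n + 1), ih,
      Finset.Nat.sum_antidiagonal_succ (n := n)]
    simp only [Nat.mul_succ, Nat.mul_zero, zero_add]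
    abel

theorem sum_antidiagonal_two_mul_add_two {M : Type*} [AddCommMonoid M] (n : ℕ) (f : ℕ × ℕ → M) :
    ∑ x ∈ antidiagonal (2 * n + 2), f x =
      ∑ x ∈ antidiagonal (n + 1), f (2 * x.1, 2 * x.2) +
        ∑ x ∈ antidiagonal n, f (2 * x.1 + 1, 2 * x.2 + 1) := by
  rw [Finset.Nat.sum_antidiagonal_succ, sum_antidiagonal_two_mul_add_one,
    Finset.Nat.sum_antidiagonal_succ (n := n)]
  simp only [Nat.mul_succ, Nat.mul_zero, add_assoc, one_add_one_eq_two]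

section ParityMean

/-- The weight that is `x` at even and `y` at odd 0-based positions, that is, `x` at odd and `y` at
even positions in the 1-based convention of the statistics `odes` and `edes`. -/
def parityWeight {M : Type*} (x y : M) (i : ℕ) : M :=
  if Even i then x else y

section ParityWeight

variable {M : Type*} (x y : M) (k : ℕ)

theorem parityWeight_two_mul : parityWeight x y (2 * k) = x := by
  simp [parityWeight]

theorem parityWeight_two_mul_add_one : parityWeight x y (2 * k + 1) = y := by
  simp [parityWeight]

theorem ite_parityWeight_two_mul_sub_one [One M] :
    (if k = 0 then 1 else parityWeight x y (2 * k - 1)) = if k = 0 then 1 else y := by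
  cases k with
  | zero => rfl
  | succ k => exact congrArg _ (parityWeight_two_mul_add_one x y k)

theorem parityWeight_two_mul_add_one_add :
    (fun i => parityWeight x y (2 * k + 1 + i)) = parityWeight y x := by
  funext i
  by_cases hi : Even i <;> simp [parityWeight, Nat.even_add, hi]

theorem parityWeight_two_mul_add_one_add_one_add :
    (fun i => parityWeight x y (2 * k + 1 + 1 + i)) = parityWeight x y := by
  funext i
  simp [parityWeight, Nat.even_add]

end ParityWeight

variable {K : Type*} [Field K] [CharZero K]

/-- The mean over all permutations of `Fin n` of the product of `p`, `q` for each descent and of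
`r`, `s` for each ascent at an odd, respectively even, 1-based position. -/
def parityMean (p q r s : K) (n : ℕ) : K :=
  meanDescentWeight (parityWeight p q) (parityWeight r s) n

variable (p q r s : K)

@[simp]
theorem parityMean_zero : parityMean p q r s 0 = 1 := by
  simp [parityMean, meanDescentWeight, descentWeight]

@[simp]
theorem parityMean_one : parityMean p q r s 1 = 1 := by
  simp [parityMean, meanDescentWeight, descentWeight]

theorem two_mul_add_two_mul_parityMean (n : ℕ) :
    (2 * n + 2 : K) * parityMean p q r s (2 * n + 2) =
      ∑ x ∈ antidiagonal n, p * parityMean p q r s (2 * x.1 + 1) *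
        ((if x.2 = 0 then 1 else s) * parityMean p q r s (2 * x.2)) +
      ∑ x ∈ antidiagonal n, (if x.1 = 0 then 1 else q) * parityMean p q r s (2 * x.1) *
        (r * parityMean q p s r (2 * x.2 + 1)) := by
  have recurrence :=
    succ_mul_meanDescentWeight_succ (parityWeight p q) (parityWeight r s) (2 * n + 1)
  rw [sum_antidiagonal_two_mul_add_one,
    show ((2 * n + 1 : ℕ) : K) + 1 = 2 * n + 2 by push_cast; ring] at recurrence
  refine recurrence.trans (congrArg₂ _ (sum_congr rfl fun x _ => ?_) (sum_congr rfl fun x _ => ?_))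
  · simp [parityMean, parityWeight_two_mul, parityWeight_two_mul_add_one,
      parityWeight_two_mul_add_one_add_one_add]
  · simp only [parityMean, mul_eq_zero, two_ne_zero, false_or, Nat.succ_ne_zero, if_false,
      ite_parityWeight_two_mul_sub_one, parityWeight_two_mul, parityWeight_two_mul_add_one_add]

theorem two_mul_add_three_mul_parityMean (n : ℕ) :
    (2 * n + 3 : K) * parityMean p q r s (2 * n + 3) =
      ∑ x ∈ antidiagonal (n + 1), (if x.1 = 0 then 1 else q) * parityMean p q r s (2 * x.1) *
        ((if x.2 = 0 then 1 else r) * parityMean q p s r (2 * x.2)) +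
      ∑ x ∈ antidiagonal n, p * parityMean p q r s (2 * x.1 + 1) *
        (s * parityMean p q r s (2 * x.2 + 1)) := by
  have recurrence :=
    succ_mul_meanDescentWeight_succ (parityWeight p q) (parityWeight r s) (2 * n + 2)
  rw [sum_antidiagonal_two_mul_add_two,
    show ((2 * n + 2 : ℕ) : K) + 1 = 2 * n + 3 by push_cast; ring] at recurrence
  refine recurrence.trans (congrArg₂ _ (sum_congr rfl fun x _ => ?_) (sum_congr rfl fun x _ => ?_))
  · simp only [parityMean, mul_eq_zero, two_ne_zero, false_or, ite_parityWeight_two_mul_sub_one,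
      parityWeight_two_mul, parityWeight_two_mul_add_one_add]
  · simp [parityMean, parityWeight_two_mul_add_one, parityWeight_two_mul,
      parityWeight_two_mul_add_one_add_one_add]

end ParityMean

/-- The coefficients of the derivative of `v ^ 2 / 2`, where `v = ∑ i, u i * t ^ (2 * i + 1)`. -/
theorem sum_antidiagonal_two_mul_add_one_mul_mul {K : Type*} [CommRing K] [NoZeroDivisors K]
    [CharZero K] (u : ℕ → K) (n : ℕ) :
    ∑ x ∈ antidiagonal n, (2 * x.1 + 1) * u x.1 * u x.2 =
      (n + 1) * ∑ x ∈ antidiagonal n, u x.1 * u x.2 := by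
  have swap : ∑ x ∈ antidiagonal n, (2 * x.1 + 1) * u x.1 * u x.2 =
      ∑ x ∈ antidiagonal n, (2 * x.2 + 1) * u x.1 * u x.2 := by
    rw [← Finset.Nat.sum_antidiagonal_swap]
    exact sum_congr rfl fun x _ => by rw [Prod.fst_swap, Prod.snd_swap, mul_right_comm]
  refine mul_left_cancel₀ (two_ne_zero (α := K)) ?_
  rw [two_mul]
  nth_rw 2 [swap]
  rw [← sum_add_distrib, mul_sum, mul_sum]
  refine sum_congr rfl fun x hx => ?_
  rw [← mem_antidiagonal.1 hx]
  push_cast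
  ring

section TangentCoeff

variable {K : Type*} [Field K] [CharZero K]

variable (K) in
/-- The coefficient of `t ^ (2 * n + 1)` in the power series of `tan t`, introduced combinatorially
as the proportion of alternating permutations among all permutations of `Fin (2 * n + 1)`. -/
def tangentCoeff (n : ℕ) : K :=
  parityMean 1 0 0 1 (2 * n + 1)

@[simp]
theorem tangentCoeff_zero : tangentCoeff K 0 = 1 := by
  simp [tangentCoeff]

/-- The coefficientwise form of `tan' = 1 + tan ^ 2`. -/
theorem two_mul_add_three_mul_tangentCoeff (n : ℕ) :
    (2 * n + 3) * tangentCoeff K (n + 1) =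
      ∑ x ∈ antidiagonal n, tangentCoeff K x.1 * tangentCoeff K x.2 := by
  have even_blocks_vanish : ∑ x ∈ antidiagonal (n + 1),
      (if x.1 = 0 then 1 else (0 : K)) * parityMean 1 0 0 1 (2 * x.1) *
        ((if x.2 = 0 then 1 else 0) * parityMean 0 1 1 0 (2 * x.2)) = 0 := by
    refine sum_eq_zero fun x hx => ?_
    rcases eq_or_ne x.1 0 with h | h
    · simp [show x.2 ≠ 0 by have := mem_antidiagonal.1 hx; omega]
    · simp [h]
  rw [tangentCoeff, show 2 * (n + 1) + 1 = 2 * n + 3 by ring, two_mul_add_three_mul_parityMean,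
    even_blocks_vanish, zero_add]
  simp only [one_mul, tangentCoeff]

theorem sum_antidiagonal_pow_mul_tangentCoeff (a : K) (n : ℕ) :
    ∑ x ∈ antidiagonal n, a ^ x.1 * tangentCoeff K x.1 * (a ^ x.2 * tangentCoeff K x.2) =
      a ^ n * ((2 * n + 3) * tangentCoeff K (n + 1)) := by
  rw [two_mul_add_three_mul_tangentCoeff, mul_sum]
  refine sum_congr rfl fun x hx => ?_
  rw [← mem_antidiagonal.1 hx, pow_add]
  ring

end TangentCoeff

section AtNegOne

variable {K : Type*} [Field K] [CharZero K]

/-- The closed forms of the four interleaved sequences of means at `q = -1`, at the index `n`: the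
coefficients of `e₁`, `e₂`, `f₁`, `f₂` in the solution of the differential system. Since
`u ^ 2 = (u' - 1) / a`, the coefficient of `u ^ 2` involves `a ^ (n - 1)`; the truncated subtraction
is guarded by `n = 0`. -/
structure IsTangentialAt (p : K) (n : ℕ) : Prop where
  even : parityMean p (-1) 1 1 (2 * n) =
    if n = 0 then 1 else (p + 1) / 2 * (((p - 1) / 2) ^ (n - 1) * ((2 * n + 1) * tangentCoeff K n))
  even_swap : parityMean (-1) p 1 1 (2 * n) = if n = 0 then 1 else 0
  odd : parityMean p (-1) 1 1 (2 * n + 1) = ((p - 1) / 2) ^ n * tangentCoeff K n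
  odd_swap : parityMean (-1) p 1 1 (2 * n + 1) = ((p - 1) / 2) ^ n * tangentCoeff K n

variable {p : K} {n : ℕ}

theorem IsTangentialAt.add_ite_mul_even (h : IsTangentialAt p n) :
    (p + if n = 0 then 1 else -1) * parityMean p (-1) 1 1 (2 * n) =
      (p + 1) * ((2 * n + 1) * (((p - 1) / 2) ^ n * tangentCoeff K n)) := by
  rw [h.even]
  cases n with
  | zero => simp
  | succ n =>
    simp only [n.succ_ne_zero, if_false, Nat.add_sub_cancel]
    ring

theorem parityMean_even_of_isTangentialAt (h : ∀ j ≤ n, IsTangentialAt p j) :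
    parityMean p (-1) 1 1 (2 * n + 2) =
      (p + 1) / 2 * (((p - 1) / 2) ^ n * ((2 * n + 3) * tangentCoeff K (n + 1))) := by
  set u : ℕ → K := fun j => ((p - 1) / 2) ^ j * tangentCoeff K j with u_def
  have two_mul_add_two_ne_zero : (2 * n + 2 : K) ≠ 0 := by exact_mod_cast (2 * n + 1).succ_ne_zero
  refine mul_left_cancel₀ two_mul_add_two_ne_zero ?_
  calc (2 * n + 2) * parityMean p (-1) 1 1 (2 * n + 2)
      = ∑ x ∈ antidiagonal n,
          (p + if x.1 = 0 then 1 else -1) * parityMean p (-1) 1 1 (2 * x.1) * u x.2 := by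
        rw [two_mul_add_two_mul_parityMean, ← Finset.Nat.sum_antidiagonal_swap, ← sum_add_distrib]
        refine sum_congr rfl fun x hx => ?_
        have hx₂ := h x.2 (HasAntidiagonal.antidiagonal.snd_le hx)
        rw [Prod.fst_swap, Prod.snd_swap, ite_self, hx₂.odd, hx₂.odd_swap]
        ring
    _ = (p + 1) * ∑ x ∈ antidiagonal n, (2 * x.1 + 1) * u x.1 * u x.2 := by
        rw [mul_sum]
        refine sum_congr rfl fun x hx => ?_
        rw [(h x.1 (HasAntidiagonal.antidiagonal.fst_le hx)).add_ite_mul_even]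
        ring
    _ = _ := by
        rw [sum_antidiagonal_two_mul_add_one_mul_mul, u_def, sum_antidiagonal_pow_mul_tangentCoeff]
        ring

theorem parityMean_even_swap_of_isTangentialAt (h : ∀ j ≤ n, IsTangentialAt p j) :
    parityMean (-1) p 1 1 (2 * n + 2) = 0 := by
  have two_mul_add_two_ne_zero : (2 * n + 2 : K) ≠ 0 := by exact_mod_cast (2 * n + 1).succ_ne_zero
  refine (mul_eq_zero.1 ?_).resolve_left two_mul_add_two_ne_zero
  rw [two_mul_add_two_mul_parityMean, ← Finset.Nat.sum_antidiagonal_swap, ← sum_add_distrib]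
  refine sum_eq_zero fun x hx => ?_
  have hx₂ := h x.2 (HasAntidiagonal.antidiagonal.snd_le hx)
  rw [Prod.fst_swap, Prod.snd_swap, hx₂.odd, hx₂.odd_swap,
    (h x.1 (HasAntidiagonal.antidiagonal.fst_le hx)).even_swap]
  split_ifs <;> ring

theorem parityMean_odd_of_isTangentialAt (h : ∀ j ≤ n, IsTangentialAt p j) :
    parityMean p (-1) 1 1 (2 * n + 3) = ((p - 1) / 2) ^ (n + 1) * tangentCoeff K (n + 1) := by
  have even_part : ∑ x ∈ antidiagonal (n + 1), (if x.1 = 0 then 1 else -1) *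
      parityMean p (-1) 1 1 (2 * x.1) *
        ((if x.2 = 0 then 1 else 1) * parityMean (-1) p 1 1 (2 * x.2)) =
      -parityMean p (-1) 1 1 (2 * n + 2) := by
    rw [Finset.Nat.sum_antidiagonal_succ', sum_eq_zero fun x hx => ?_]
    · simp [mul_add]
    · have hx₂ := HasAntidiagonal.antidiagonal.snd_le hx
      simp [mul_add, parityMean_even_swap_of_isTangentialAt fun j hj => h j (hj.trans hx₂)]
  have odd_part : ∑ x ∈ antidiagonal n, p * parityMean p (-1) 1 1 (2 * x.1 + 1) *
      (1 * parityMean p (-1) 1 1 (2 * x.2 + 1)) =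
      p * (((p - 1) / 2) ^ n * ((2 * n + 3) * tangentCoeff K (n + 1))) := by
    rw [← sum_antidiagonal_pow_mul_tangentCoeff, mul_sum]
    refine sum_congr rfl fun x hx => ?_
    rw [(h x.1 (HasAntidiagonal.antidiagonal.fst_le hx)).odd,
      (h x.2 (HasAntidiagonal.antidiagonal.snd_le hx)).odd]
    ring
  have two_mul_add_three_ne_zero : (2 * n + 3 : K) ≠ 0 := by exact_mod_cast (2 * n + 2).succ_ne_zero
  refine mul_left_cancel₀ two_mul_add_three_ne_zero ?_
  rw [two_mul_add_three_mul_parityMean, even_part, odd_part, parityMean_even_of_isTangentialAt h]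
  ring

theorem parityMean_odd_swap_of_isTangentialAt (h : ∀ j ≤ n, IsTangentialAt p j) :
    parityMean (-1) p 1 1 (2 * n + 3) = ((p - 1) / 2) ^ (n + 1) * tangentCoeff K (n + 1) := by
  have even_part : ∑ x ∈ antidiagonal (n + 1), (if x.1 = 0 then 1 else p) *
      parityMean (-1) p 1 1 (2 * x.1) *
        ((if x.2 = 0 then 1 else 1) * parityMean p (-1) 1 1 (2 * x.2)) =
      parityMean p (-1) 1 1 (2 * n + 2) := by
    rw [Finset.Nat.sum_antidiagonal_succ, sum_eq_zero fun x hx => ?_]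
    · simp [mul_add]
    · have hx₁ := HasAntidiagonal.antidiagonal.fst_le hx
      simp [mul_add, parityMean_even_swap_of_isTangentialAt fun j hj => h j (hj.trans hx₁)]
  have odd_part : ∑ x ∈ antidiagonal n, -1 * parityMean (-1) p 1 1 (2 * x.1 + 1) *
      (1 * parityMean (-1) p 1 1 (2 * x.2 + 1)) =
      -(((p - 1) / 2) ^ n * ((2 * n + 3) * tangentCoeff K (n + 1))) := by
    rw [← sum_antidiagonal_pow_mul_tangentCoeff, ← sum_neg_distrib]
    refine sum_congr rfl fun x hx => ?_
    rw [(h x.1 (HasAntidiagonal.antidiagonal.fst_le hx)).odd_swap,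
      (h x.2 (HasAntidiagonal.antidiagonal.snd_le hx)).odd_swap]
    ring
  have two_mul_add_three_ne_zero : (2 * n + 3 : K) ≠ 0 := by exact_mod_cast (2 * n + 2).succ_ne_zero
  refine mul_left_cancel₀ two_mul_add_three_ne_zero ?_
  rw [two_mul_add_three_mul_parityMean, even_part, odd_part, parityMean_even_of_isTangentialAt h]
  ring

variable (p n) in
theorem isTangentialAt : IsTangentialAt p n := by
  induction n using Nat.strong_induction_on with
  | h n ih =>
    cases n with
    | zero => constructor <;> simp
    | succ n =>
      have h (j : ℕ) (hj : j ≤ n) : IsTangentialAt p j := ih j (Nat.lt_succ_of_le hj)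
      refine ⟨?_, ?_, parityMean_odd_of_isTangentialAt h, parityMean_odd_swap_of_isTangentialAt h⟩
      · rw [if_neg n.succ_ne_zero, Nat.mul_succ, parityMean_even_of_isTangentialAt h]
        push_cast
        ring_nf
      · exact (parityMean_even_swap_of_isTangentialAt h).trans (if_neg n.succ_ne_zero).symm

end AtNegOne

theorem mem_descentSet {n : ℕ} {π : Equiv.Perm (Fin n)} {i : ℕ} :
    i ∈ descentSet π ↔ ∃ h : i + 1 < n, π ⟨i + 1, h⟩ < π ⟨i, Nat.lt_of_succ_lt h⟩ := by
  simp only [descentSet, mem_filter, mem_range, and_iff_right_iff_imp]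
  rintro ⟨h, -⟩
  omega

theorem descentSet_subset_range {n : ℕ} (π : Equiv.Perm (Fin n)) :
    descentSet π ⊆ range (n - 1) := fun i hi => by
  obtain ⟨h, -⟩ := mem_descentSet.1 hi
  exact mem_range.2 (by omega)

theorem isAlternating_iff_forall_mem_range {n : ℕ} {π : Equiv.Perm (Fin n)} :
    IsAlternating π ↔ ∀ i ∈ range (n - 1), (i ∈ descentSet π ↔ Even i) := by
  simp only [IsAlternating, mem_descentSet, mem_range, Nat.lt_sub_iff_add_lt]
  exact forall₂_congr fun i hi => by rw [exists_prop_of_true hi]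

theorem descentWeight_eq_prod_descentSet {M : Type*} [CommMonoid M] (α β : ℕ → M) {n : ℕ}
    (π : Equiv.Perm (Fin n)) :
    descentWeight α β π = ∏ i ∈ range (n - 1), if i ∈ descentSet π then α i else β i := by
  simp only [descentWeight, mem_descentSet]

theorem descentWeight_parityWeight {M : Type*} [CommMonoid M] (p q : M) {n : ℕ}
    (π : Equiv.Perm (Fin n)) :
    descentWeight (parityWeight p q) (parityWeight 1 1) π = p ^ odes π * q ^ edes π := by
  calc descentWeight (parityWeight p q) (parityWeight 1 1) π
      = ∏ i ∈ descentSet π, if Even i then p else q := by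
        simp only [descentWeight_eq_prod_descentSet, parityWeight, ite_self, prod_ite_mem,
          inter_eq_right.2 (descentSet_subset_range π)]
    _ = p ^ odes π * q ^ edes π := by
        simp only [prod_ite, prod_const, odes, edes, Nat.not_even_iff_odd]

theorem descentWeight_parityWeight_eq_ite_isAlternating {M : Type*} [CommMonoidWithZero M] {n : ℕ}
    (π : Equiv.Perm (Fin n)) [Decidable (IsAlternating π)] :
    descentWeight (parityWeight (1 : M) 0) (parityWeight 0 1) π =
      if IsAlternating π then 1 else 0 := by
  have factor (i : ℕ) : (if i ∈ descentSet π then parityWeight (1 : M) 0 i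
      else parityWeight 0 1 i) = if (i ∈ descentSet π ↔ Even i) then 1 else 0 := by
    by_cases hi : i ∈ descentSet π <;> by_cases i_even : Even i <;>
      simp [hi, i_even, parityWeight]
  simp only [descentWeight_eq_prod_descentSet, factor, prod_ite_zero, prod_const_one,
    isAlternating_iff_forall_mem_range]

theorem factorial_mul_parityMean {K : Type*} [Field K] [CharZero K] (p q r s : K) (n : ℕ) :
    n.factorial * parityMean p q r s n =
      ∑ π : Equiv.Perm (Fin n), descentWeight (parityWeight p q) (parityWeight r s) π := by
  rw [parityMean, meanDescentWeight, ← Fintype.card_mul_expect, Fintype.card_perm,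
    Fintype.card_fin]

theorem refinedEulerian_eq_factorial_mul_parityMean (n : ℕ) (p q : ℝ) :
    refinedEulerian n p q = n.factorial * parityMean p q 1 1 n := by
  simp only [factorial_mul_parityMean, descentWeight_parityWeight, refinedEulerian]

theorem eulerNumber_eq_factorial_mul_tangentCoeff (n : ℕ) :
    (eulerNumber (2 * n + 1) : ℝ) = (2 * n + 1).factorial * tangentCoeff ℝ n := by
  classical
  simp only [tangentCoeff, factorial_mul_parityMean,
    descentWeight_parityWeight_eq_ite_isAlternating, sum_boole, eulerNumber]

/-- A_{2n+2}(p,−1) = ((p+1)/2)((p−1)/2)^n E_{2n+3}. -/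
theorem refinedEulerian_even_at_neg_one (n : ℕ) (p : ℝ) :
    refinedEulerian (2 * n + 2) p (-1) =
      ((p + 1) / 2) * ((p - 1) / 2) ^ n * (eulerNumber (2 * n + 3) : ℝ) := by
  have mean : parityMean p (-1) 1 1 (2 * n + 2) =
      (p + 1) / 2 * (((p - 1) / 2) ^ n * ((2 * n + 3) * tangentCoeff ℝ (n + 1))) :=
    parityMean_even_of_isTangentialAt fun j _ => isTangentialAt p j
  have euler : (eulerNumber (2 * n + 3) : ℝ) =
      (2 * n + 3) * (2 * n + 2).factorial * tangentCoeff ℝ (n + 1) := by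
    rw [show 2 * n + 3 = 2 * (n + 1) + 1 by ring, eulerNumber_eq_factorial_mul_tangentCoeff,
      Nat.mul_succ, Nat.factorial_succ]
    push_cast
    ring
  rw [refinedEulerian_eq_factorial_mul_parityMean, mean, euler]
  ring
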